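/- arXiv:2510.05316 — 5 statements merged into one kernel-verified Lean document; each statement's English description precedes it below -/
import Mathlib

section
/- Let $\iota$ be a finite index set and for each $i \in \iota$ let $d_i \ge 1$. Consider the joint Hilbert space $\mathbb{C}^{\prod_{i} [d_i]}$ (registers $\mathcal{R}_i = \mathbb{C}^{d_i}$). Let $(P_1^i)_{i\in\iota}$ and $(P_2^i)_{i\in\iota}$ be two families of orthogonal projection matrices, $P_b^i \in M_{d_i}(\mathbb{C})$, and let $\ell$ be an upper bound on the number of indices $i$ with $P_1^i \ne P_2^i$. Let $\rho$ be a density matrix on the joint space. For $b \in \{1,2\}$ and an outcome string $s : \iota \to \{0,1\}$ let $M_b(s)$ be the joint-space matrix with entries $M_b(s)(x,y) = \prod_{i\in\iota} Q_b^{i,s(i)}(x_i,y_i)$, where $Q_b^{i,1} := P_b^i$ and $Q_b^{i,0} := I - P_b^i$, and set $\Pr_b[s] := \mathrm{Tr}(M_b(s)\,\rho)$. Then for every integer $N$, $\sum_{s : |\{i : s(i)=1\}| \ge N} \Pr_1[s] \;\le\; \sum_{s : |\{i : s(i)=1\}| \ge N - \ell} \Pr_2[s]$. -/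
open scoped Classical ComplexOrder

/-- A sum over Boolean strings of a product weight, restricted by a condition on the string outside
`E`, depends on the weights at indices in `E` only through their totals. -/
lemma sum_prod_eq_of_marginal_eq {ι R : Type*} [Fintype ι] [DecidableEq ι] [CommSemiring R]
    (E : Finset ι) (C : (ι → Bool) → Prop) [DecidablePred C] (f g : ι → Bool → R)
    (hfg : ∀ i ∉ E, f i = g i) (hsum : ∀ i, ∑ c, f i c = ∑ c, g i c) :
    ∑ s : ι → Bool with C (fun i => if i ∈ E then false else s i), ∏ i, f i (s i) =
      ∑ s : ι → Bool with C (fun i => if i ∈ E then false else s i), ∏ i, g i (s i) := by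
  let r : (ι → Bool) → ι → Bool := fun s i => if i ∈ E then false else s i
  rw [← Finset.sum_fiberwise _ r fun s => ∏ i, f i (s i),
    ← Finset.sum_fiberwise _ r fun s => ∏ i, g i (s i)]
  refine Finset.sum_congr rfl fun t _ => ?_
  by_cases ht : C t ∧ r t = t
  · have hfiber : (Finset.univ.filter fun s => C (r s)).filter (fun s => r s = t) =
        Fintype.piFinset fun i => if i ∈ E then Finset.univ else {t i} := by
      ext s
      simp only [Finset.mem_filter, Finset.mem_univ, true_and, Fintype.mem_piFinset]
      constructor
      · rintro ⟨-, rfl⟩ i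
        by_cases hi : i ∈ E <;> simp [r, hi]
      · intro h
        have hs : r s = t := by
          funext i
          have hi := h i
          have hti := congrFun ht.2 i
          by_cases hiE : i ∈ E <;> simp_all [r]
        exact ⟨hs ▸ ht.1, hs⟩
    change ∑ s ∈ (Finset.univ.filter fun s => C (r s)).filter (fun s => r s = t), _ =
      ∑ s ∈ (Finset.univ.filter fun s => C (r s)).filter (fun s => r s = t), _
    rw [hfiber, ← Finset.prod_univ_sum, ← Finset.prod_univ_sum]
    refine Finset.prod_congr rfl fun i _ => ?_
    by_cases hi : i ∈ E
    · simpa only [hi, if_true] using hsum i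
    · simp [hi, hfg i hi]
  · have hfiber : (Finset.univ.filter fun s => C (r s)).filter (fun s => r s = t) = ∅ := by
      refine Finset.eq_empty_of_forall_notMem fun s hs => ht ?_
      simp only [Finset.mem_filter, Finset.mem_univ, true_and] at hs
      obtain ⟨hC, rfl⟩ := hs
      refine ⟨hC, ?_⟩
      funext i
      by_cases hi : i ∈ E <;> simp [r, hi]
    change ∑ s ∈ (Finset.univ.filter fun s => C (r s)).filter (fun s => r s = t), _ =
      ∑ s ∈ (Finset.univ.filter fun s => C (r s)).filter (fun s => r s = t), _
    rw [hfiber, Finset.sum_empty, Finset.sum_empty]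

/-- The trace of an orthogonal projection times a positive semidefinite matrix is nonnegative. -/
lemma trace_mul_re_nonneg_of_isHermitian_of_idem {n : Type*} [Fintype n] {Q ρ : Matrix n n ℂ}
    (hQ : Q.IsHermitian) (hQQ : Q * Q = Q) (hρ : ρ.PosSemidef) : 0 ≤ ((Q * ρ).trace).re := by
  have h := (hρ.mul_mul_conjTranspose_same Q).trace_nonneg
  rw [hQ.eq, Matrix.trace_mul_comm, ← mul_assoc, hQQ] at h
  exact (Complex.le_def.mp h).1

/-- A tensor product of Hermitian matrices is Hermitian. -/
lemma isHermitian_of_apply_eq_prod {ι : Type*} [Fintype ι] {n : ι → Type*}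
    {Q : ∀ i, Matrix (n i) (n i) ℂ} (hQ : ∀ i, (Q i).IsHermitian)
    {M : Matrix (∀ i, n i) (∀ i, n i) ℂ} (hM : ∀ x y, M x y = ∏ i, Q i (x i) (y i)) :
    M.IsHermitian := by
  ext x y
  simp only [Matrix.conjTranspose_apply, hM, star_prod]
  exact Finset.prod_congr rfl fun i _ => (hQ i).apply _ _

/-- A tensor product of idempotent matrices is idempotent. -/
lemma mul_self_of_apply_eq_prod {ι : Type*} [Fintype ι] [DecidableEq ι] {n : ι → Type*}
    [∀ i, Fintype (n i)] {Q : ∀ i, Matrix (n i) (n i) ℂ} (hQ : ∀ i, Q i * Q i = Q i)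
    {M : Matrix (∀ i, n i) (∀ i, n i) ℂ} (hM : ∀ x y, M x y = ∏ i, Q i (x i) (y i)) :
    M * M = M := by
  ext x y
  simp only [Matrix.mul_apply, hM, ← Finset.prod_mul_distrib]
  rw [← Fintype.prod_sum fun i j => Q i (x i) j * Q i j (y i)]
  refine Finset.prod_congr rfl fun i _ => ?_
  rw [← Matrix.mul_apply, hQ]

/-- **Changing at most `ℓ` per-register projective measurements shifts the acceptance-count
tail by at most `ℓ`.** Two families `P 0 i`, `P 1 i` of orthogonal projections acting on
disjoint registers `Fin (d i)` differ on at most `ℓ` indices (all differences lie in the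
finite set `E` of cardinality `≤ ℓ`). For a density matrix `ρ` on the joint space, the
probability (under the first family) of at least `N` accepting outcomes is at most the
probability (under the second family) of at least `N - ℓ` accepting outcomes. -/
theorem measurement_replacement_tail_bound
    {ι : Type*} [Fintype ι] [DecidableEq ι]
    (d : ι → ℕ) (hd : ∀ i, 1 ≤ d i)
    (P : Fin 2 → ∀ i, Matrix (Fin (d i)) (Fin (d i)) ℂ)
    (hHerm : ∀ b i, (P b i).IsHermitian)
    (hIdem : ∀ b i, P b i * P b i = P b i)
    (ℓ : ℕ) (E : Finset ι) (hEcard : E.card ≤ ℓ)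
    (hE : ∀ i ∉ E, P 0 i = P 1 i)
    (ρ : Matrix (∀ i, Fin (d i)) (∀ i, Fin (d i)) ℂ)
    (hρ : ρ.PosSemidef) (hρtr : ρ.trace = 1)
    (M : Fin 2 → (ι → Bool) → Matrix (∀ i, Fin (d i)) (∀ i, Fin (d i)) ℂ)
    (hM : ∀ b s x y, M b s x y =
      ∏ i, (if s i then P b i else 1 - P b i) (x i) (y i))
    (N : ℤ) :
    ∑ s ∈ Finset.univ.filter
        (fun s : ι → Bool => N ≤ ((Finset.univ.filter fun i => s i).card : ℤ)),
        ((M 0 s * ρ).trace).re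
    ≤ ∑ s ∈ Finset.univ.filter
        (fun s : ι → Bool => N - (ℓ : ℤ) ≤ ((Finset.univ.filter fun i => s i).card : ℤ)),
        ((M 1 s * ρ).trace).re := by
  let r : (ι → Bool) → ι → Bool := fun s i => if i ∈ E then false else s i
  let count : (ι → Bool) → ℤ := fun s => ((Finset.univ.filter fun i => s i).card : ℤ)
  have hnonneg : ∀ b s, 0 ≤ ((M b s * ρ).trace).re := by
    intro b s
    refine trace_mul_re_nonneg_of_isHermitian_of_idem
      (isHermitian_of_apply_eq_prod (fun i => ?_) (hM b s))
      (mul_self_of_apply_eq_prod (fun i => ?_) (hM b s)) hρ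
    · split_ifs
      · exact hHerm b i
      · exact Matrix.isHermitian_one.sub (hHerm b i)
    · split_ifs
      · exact hIdem b i
      · exact IsIdempotentElem.one_sub (hIdem b i)
  have hle : ∀ s, count (r s) ≤ count s := by
    intro s
    refine Nat.cast_le.mpr (Finset.card_le_card fun i => ?_)
    by_cases hi : i ∈ E <;> simp [r, hi]
  have hge : ∀ s, count s - ℓ ≤ count (r s) := by
    intro s
    have hsub : (Finset.univ.filter fun i => s i = true) ⊆
        (Finset.univ.filter fun i => r s i = true) ∪ E := by
      intro i
      by_cases hi : i ∈ E <;> simp [r, hi]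
    have hcard := (Finset.card_le_card hsub).trans (Finset.card_union_le _ _)
    simp only [count]
    omega
  have hmarginal : ∑ s with N - ℓ ≤ count (r s), M 0 s = ∑ s with N - ℓ ≤ count (r s), M 1 s := by
    ext x y
    simp only [Matrix.sum_apply, hM]
    refine sum_prod_eq_of_marginal_eq E (fun t => N - ℓ ≤ count t)
      (fun i c => (if c then P 0 i else 1 - P 0 i) (x i) (y i))
      (fun i c => (if c then P 1 i else 1 - P 1 i) (x i) (y i)) (fun i hi => ?_) (fun i => ?_)
    · simp only [hE i hi]
    · simp
  have hmarginal_prob : ∑ s with N - ℓ ≤ count (r s), ((M 0 s * ρ).trace).re =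
      ∑ s with N - ℓ ≤ count (r s), ((M 1 s * ρ).trace).re := by
    have h := congrArg (fun A => ((A * ρ).trace).re) hmarginal
    simpa only [Finset.sum_mul, Matrix.trace_sum, Complex.re_sum] using h
  calc
    _ ≤ ∑ s with N - ℓ ≤ count (r s), ((M 0 s * ρ).trace).re :=
      Finset.sum_le_sum_of_subset_of_nonneg
        (Finset.monotone_filter_right _ fun s _ hs => (sub_le_sub_right hs _).trans (hge s))
        fun s _ _ => hnonneg 0 s
    _ = ∑ s with N - ℓ ≤ count (r s), ((M 1 s * ρ).trace).re := hmarginal_prob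
    _ ≤ _ :=
      Finset.sum_le_sum_of_subset_of_nonneg
        (Finset.monotone_filter_right _ fun s _ hs => le_trans hs (hle s))
        fun s _ _ => hnonneg 1 s
end

section
/- Let $S \subseteq \mathbb{F}_2^m$ be a subspace, $\Delta \in \mathbb{F}_2^m \setminus S$, and $x, z \in \mathbb{F}_2^m$. Set $U := X^x Z^z$. Then, as operators on $\mathbb{C}^{\mathbb{F}_2^m}$, $U\,|S\rangle\langle S|\,U^{\dagger} + U\,|S+\Delta\rangle\langle S+\Delta|\,U^{\dagger} \;=\; H^{\otimes m}\, X^z\, \Pi[S^{\perp}]\, X^z\, H^{\otimes m}\, X^x\, \Pi[S_{\Delta}]\, X^x.$ That is, the orthogonal projector onto the span of the two encoded coset states equals the composition of the standard-basis codespace check followed by the Hadamard-basis codespace check. -/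
open scoped Classical Matrix

noncomputable section

/-- The vector space `𝔽₂^m`. -/
abbrev Vec (m : ℕ) := Fin m → ZMod 2

/-- The bilinear form `⟨v,w⟩ = ∑ᵢ vᵢ wᵢ ∈ 𝔽₂`. -/
def bform {m : ℕ} (v w : Vec m) : ZMod 2 := ∑ i, v i * w i

/-- The sign `(-1)^{⟨v,w⟩} ∈ ℂ`. -/
def sgn {m : ℕ} (v w : Vec m) : ℂ := (-1 : ℂ) ^ (bform v w).val

/-- The Pauli-X unitary `X^x : |v⟩ ↦ |v + x⟩`, as a matrix. -/
def Xop {m : ℕ} (x : Vec m) : Matrix (Vec m) (Vec m) ℂ :=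
  Matrix.of fun a b => if a = b + x then 1 else 0

/-- The Pauli-Z unitary `Z^z : |v⟩ ↦ (-1)^{⟨z,v⟩} |v⟩`, as a matrix. -/
def Zop {m : ℕ} (z : Vec m) : Matrix (Vec m) (Vec m) ℂ :=
  Matrix.diagonal fun v => sgn z v

/-- The `m`-fold Hadamard transform, with entries `(H^{⊗m})_{w,v} = 2^{-m/2} (-1)^{⟨v,w⟩}`. -/
def Had (m : ℕ) : Matrix (Vec m) (Vec m) ℂ :=
  Matrix.of fun w v => (((Real.sqrt (2 ^ m))⁻¹ : ℝ) : ℂ) * sgn v w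

/-- The projector `Π[A] = ∑_{v ∈ A} |v⟩⟨v|`. -/
def proj {m : ℕ} (A : Set (Vec m)) : Matrix (Vec m) (Vec m) ℂ :=
  Matrix.of fun a b => if a = b ∧ a ∈ A then 1 else 0

/-- The normalized coset state `|A + t⟩ = |A|^{-1/2} ∑_{v ∈ A + t} |v⟩`, as a vector of
amplitudes. -/
def cosetState {m : ℕ} (A : Set (Vec m)) (t : Vec m) : Vec m → ℂ :=
  fun v => if v ∈ (· + t) '' A then (((Real.sqrt (Nat.card A))⁻¹ : ℝ) : ℂ) else 0

/-- The dual `A^⊥ = {w : ⟨v,w⟩ = 0 for all v ∈ A}`. -/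
def perp {m : ℕ} (A : Set (Vec m)) : Set (Vec m) := {w | ∀ v ∈ A, bform v w = 0}

/-- `S_Δ = S ∪ (S + Δ)`. -/
def SDelta {m : ℕ} (S : Submodule (ZMod 2) (Vec m)) (Δ : Vec m) : Set (Vec m) :=
  (S : Set (Vec m)) ∪ ((· + Δ) '' (S : Set (Vec m)))

/-- The rank-one projector `|ψ⟩⟨ψ|`. -/
def outer {m : ℕ} (ψ : Vec m → ℂ) : Matrix (Vec m) (Vec m) ℂ :=
  Matrix.of fun a b => ψ a * star (ψ b)

end


section

variable {m : ℕ}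

theorem zmod_two_eq_zero_or_one (c : ZMod 2) : c = 0 ∨ c = 1 := by
  revert c
  decide

theorem sgn_eq_ite (v w : Vec m) : sgn v w = if bform v w = 0 then 1 else -1 := by
  unfold sgn
  obtain h | h := zmod_two_eq_zero_or_one (bform v w) <;> simp [h, ZMod.val_one]

theorem bform_comm (v w : Vec m) : bform v w = bform w v := by
  simp [bform, mul_comm]

theorem sgn_comm (v w : Vec m) : sgn v w = sgn w v := by
  rw [sgn, sgn, bform_comm]

theorem bform_add_right (u v w : Vec m) : bform u (v + w) = bform u v + bform u w := by
  simp [bform, mul_add, Finset.sum_add_distrib]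

theorem sgn_add_right (u v w : Vec m) : sgn u (v + w) = sgn u v * sgn u w := by
  simp only [sgn, bform_add_right]
  obtain h | h := zmod_two_eq_zero_or_one (bform u v) <;>
    obtain h' | h' := zmod_two_eq_zero_or_one (bform u w) <;>
    simp [h, h', ZMod.val_one, CharTwo.add_self_eq_zero]

theorem sgn_add_left (u v w : Vec m) : sgn (u + v) w = sgn u w * sgn v w := by
  rw [sgn_comm, sgn_add_right, sgn_comm w u, sgn_comm w v]

theorem star_sgn (v w : Vec m) : star (sgn v w) = sgn v w := by
  simp [sgn]

theorem vec_add_self (v : Vec m) : v + v = 0 :=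
  funext fun i => CharTwo.add_self_eq_zero (v i)

theorem eq_add_iff_add_eq (a b x : Vec m) : a = b + x ↔ a + x = b := by
  constructor <;> rintro rfl <;> rw [add_assoc, vec_add_self, add_zero]

/-- The signs of a fixed vector, summed over a subspace, vanish off the dual. -/
theorem sum_sgn_submodule (S : Submodule (ZMod 2) (Vec m)) (w : Vec m) :
    ∑ s : Vec m, (if s ∈ S then sgn s w else 0) =
      if w ∈ perp (S : Set (Vec m)) then (Nat.card S : ℂ) else 0 := by
  split_ifs with hw
  · have h (s : Vec m) : (if s ∈ S then sgn s w else 0) = if s ∈ S then (1 : ℂ) else 0 := by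
      split_ifs with hs
      · rw [sgn_eq_ite, if_pos (hw s hs)]
      · rfl
    simp_rw [h]
    rw [Finset.sum_boole, Nat.card_eq_fintype_card, Fintype.card_subtype]
  · obtain ⟨t, ht, htw⟩ : ∃ t ∈ S, bform t w ≠ 0 := by
      simpa [perp] using hw
    have hneg : sgn t w = -1 := by rw [sgn_eq_ite, if_neg htw]
    have key := Equiv.sum_comp (Equiv.addRight t) fun s => if s ∈ S then sgn s w else 0
    simp only [Equiv.coe_addRight, S.add_mem_iff_left ht, sgn_add_left, hneg] at key
    have h (s : Vec m) : (if s ∈ S then sgn s w * -1 else 0) =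
        -(if s ∈ S then sgn s w else 0) := by
      split_ifs <;> simp
    simp_rw [h, Finset.sum_neg_distrib] at key
    linear_combination -key / 2

theorem mem_perp_univ (w : Vec m) : w ∈ perp (Set.univ : Set (Vec m)) ↔ w = 0 := by
  constructor
  · intro h
    ext i
    simpa [bform, Pi.single_apply] using h (Pi.single i 1) trivial
  · rintro rfl v _
    simp [bform]

theorem sum_sgn (w : Vec m) : ∑ s : Vec m, sgn s w = if w = 0 then (2 : ℂ) ^ m else 0 := by
  have h := sum_sgn_submodule (⊤ : Submodule (ZMod 2) (Vec m)) w
  simpa [mem_perp_univ] using h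

theorem card_submodule_ne_zero (S : Submodule (ZMod 2) (Vec m)) : (Nat.card S : ℂ) ≠ 0 :=
  Nat.cast_ne_zero.mpr (ne_of_gt Nat.card_pos)

/-- Poisson summation for a subspace of `𝔽₂^m`. -/
theorem sum_sgn_perp (S : Submodule (ZMod 2) (Vec m)) (u : Vec m) :
    ∑ w : Vec m, (if w ∈ perp (S : Set (Vec m)) then sgn w u else 0) =
      if u ∈ S then (2 : ℂ) ^ m * (Nat.card S : ℂ)⁻¹ else 0 := by
  have hS := card_submodule_ne_zero S
  have h (w : Vec m) : (if w ∈ perp (S : Set (Vec m)) then sgn w u else 0) =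
      (Nat.card S : ℂ)⁻¹ * ∑ s : Vec m, if s ∈ S then sgn w (s + u) else 0 := by
    have hs (s : Vec m) : (if s ∈ S then sgn w (s + u) else 0) =
        (if s ∈ S then sgn s w else 0) * sgn w u := by
      rw [sgn_add_right, sgn_comm w s, ite_mul, zero_mul]
    simp_rw [hs]
    rw [← Finset.sum_mul, sum_sgn_submodule]
    split_ifs
    · field_simp
    · simp
  simp_rw [h]
  rw [← Finset.mul_sum, Finset.sum_comm]
  have hs (s : Vec m) : ∑ w : Vec m, (if s ∈ S then sgn w (s + u) else 0) =
      if s = u then (if u ∈ S then (2 : ℂ) ^ m else 0) else 0 := by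
    have hsu : s + u = 0 ↔ s = u := by
      rw [eq_comm, eq_add_iff_add_eq, zero_add, eq_comm]
    by_cases hmem : s ∈ S
    · simp only [hmem, if_true, sum_sgn, hsu]
      split_ifs <;> simp_all
    · simp only [hmem, if_false, Finset.sum_const_zero]
      split_ifs <;> simp_all
  simp_rw [hs]
  rw [Finset.sum_ite_eq' Finset.univ u, if_pos (Finset.mem_univ u)]
  split_ifs <;> ring

theorem mul_Xop_apply (M : Matrix (Vec m) (Vec m) ℂ) (x a b : Vec m) :
    (M * Xop x) a b = M a (b + x) := by
  simp [Matrix.mul_apply, Xop]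

theorem Xop_mul_apply (M : Matrix (Vec m) (Vec m) ℂ) (x a b : Vec m) :
    (Xop x * M) a b = M (a + x) b := by
  simp [Matrix.mul_apply, Xop, eq_add_iff_add_eq]

theorem proj_eq_diagonal (A : Set (Vec m)) :
    proj A = Matrix.diagonal fun v => if v ∈ A then 1 else 0 := by
  ext a b
  simp only [proj, Matrix.of_apply, Matrix.diagonal_apply, ite_and]

theorem pauli_conj_outer_apply (ψ : Vec m → ℂ) (x z a b : Vec m) :
    ((Xop x * Zop z) * outer ψ * (Xop x * Zop z)ᴴ) a b =
      sgn z (a + b) * (ψ (a + x) * star (ψ (b + x))) := by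
  have hpauli (c : Vec m → ℂ) (d : Vec m) : ((Xop x * Zop z) *ᵥ c) d =
      sgn z (d + x) * c (d + x) := by
    rw [← Matrix.mulVec_mulVec]
    simp [Matrix.mulVec, dotProduct, Xop, Zop, Matrix.diagonal_apply, eq_add_iff_add_eq]
  have houter : outer ψ = Matrix.vecMulVec ψ (star ψ) := rfl
  rw [houter, Matrix.mul_vecMulVec, Matrix.vecMulVec_mul, ← Matrix.star_mulVec,
    Matrix.vecMulVec_apply, Pi.star_apply, hpauli, hpauli, star_mul', star_sgn]
  have hsgn : sgn z (a + b) = sgn z (a + x) * sgn z (b + x) := by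
    rw [← sgn_add_right, add_add_add_comm, vec_add_self, add_zero]
  rw [hsgn]
  ring

/-- Entries of the Hadamard-basis check `H X^z Π[S^⊥] X^z H`. -/
theorem hadamard_check_apply (S : Submodule (ZMod 2) (Vec m)) (z a b : Vec m) :
    (Had m * Xop z * proj (perp (S : Set (Vec m))) * Xop z * Had m) a b =
      if a + b ∈ S then sgn z (a + b) * (Nat.card S : ℂ)⁻¹ else 0 := by
  have hroot : (((Real.sqrt (2 ^ m))⁻¹ : ℝ) : ℂ) * (((Real.sqrt (2 ^ m))⁻¹ : ℝ) : ℂ) =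
      ((2 : ℂ) ^ m)⁻¹ := by
    rw [← Complex.ofReal_mul, ← mul_inv, Real.mul_self_sqrt (by positivity)]
    push_cast
    rfl
  rw [Matrix.mul_assoc, Matrix.mul_apply, proj_eq_diagonal]
  have hterm (w : Vec m) :
      (Had m * Xop z * Matrix.diagonal fun v =>
          if v ∈ perp (S : Set (Vec m)) then (1 : ℂ) else 0) a w * (Xop z * Had m) w b =
        ((2 : ℂ) ^ m)⁻¹ * sgn z (a + b) *
          if w ∈ perp (S : Set (Vec m)) then sgn w (a + b) else 0 := by
    rw [Matrix.mul_diagonal, mul_Xop_apply, Xop_mul_apply, ← hroot]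
    simp only [Had, Matrix.of_apply]
    rw [sgn_comm b, sgn_add_left, sgn_add_left, sgn_add_right, sgn_add_right]
    split_ifs <;> ring
  simp_rw [hterm]
  rw [← Finset.mul_sum, sum_sgn_perp]
  split_ifs
  · field_simp
  · simp

theorem mem_image_add_right (A : Set (Vec m)) (v t : Vec m) :
    v ∈ (· + t) '' A ↔ v + t ∈ A := by
  constructor
  · rintro ⟨u, hu, rfl⟩
    rwa [add_assoc, vec_add_self, add_zero]
  · intro h
    exact ⟨v + t, h, ((eq_add_iff_add_eq v (v + t) t).mpr rfl).symm⟩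

theorem cosetState_mul_star (S : Submodule (ZMod 2) (Vec m)) (t u v : Vec m) :
    cosetState (S : Set (Vec m)) t u * star (cosetState (S : Set (Vec m)) t v) =
      if u + v ∈ S ∧ v + t ∈ S then (Nat.card S : ℂ)⁻¹ else 0 := by
  have hroot : (((Real.sqrt (Nat.card S))⁻¹ : ℝ) : ℂ) * (((Real.sqrt (Nat.card S))⁻¹ : ℝ) : ℂ) =
      (Nat.card S : ℂ)⁻¹ := by
    rw [← Complex.ofReal_mul, ← mul_inv, Real.mul_self_sqrt (by positivity)]
    push_cast
    rfl
  have hmem : (u + v ∈ S ∧ v + t ∈ S) ↔ (u + t ∈ S ∧ v + t ∈ S) := by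
    refine and_congr_left fun hv => ?_
    rw [← S.add_mem_iff_left hv, add_assoc, ← add_assoc v v, vec_add_self, zero_add]
  simp only [cosetState, mem_image_add_right, SetLike.mem_coe, hmem]
  by_cases hu : u + t ∈ S <;> by_cases hv : v + t ∈ S <;>
    simp only [hu, hv, and_self, and_true, and_false, if_true, if_false, star_zero, mul_zero,
      zero_mul]
  rw [← hroot]
  simp

end

/-- **Codespace projector identity for coset-state authentication.** For a subspace
`S ⊆ 𝔽₂^m`, `Δ ∉ S`, and one-time pad keys `x, z`, with `U = X^x Z^z`, the orthogonal
projector onto the span of the two encoded coset states `U|S⟩` and `U|S+Δ⟩` equals the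
composition of the standard-basis codespace check followed by the Hadamard-basis codespace
check:
`U|S⟩⟨S|U† + U|S+Δ⟩⟨S+Δ|U† = H^{⊗m} X^z Π[S^⊥] X^z H^{⊗m} X^x Π[S_Δ] X^x`. -/
theorem csa_codespace_projector {m : ℕ} (hm : 1 ≤ m)
    (S : Submodule (ZMod 2) (Vec m)) (Δ : Vec m) (hΔ : Δ ∉ S) (x z : Vec m) :
    (Xop x * Zop z) * outer (cosetState (S : Set (Vec m)) 0) * (Xop x * Zop z)ᴴ
      + (Xop x * Zop z) * outer (cosetState (S : Set (Vec m)) Δ) * (Xop x * Zop z)ᴴ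
    = Had m * Xop z * proj (perp (S : Set (Vec m))) * Xop z * Had m
        * Xop x * proj (SDelta S Δ) * Xop x := by
  ext a b
  rw [Matrix.add_apply, pauli_conj_outer_apply, pauli_conj_outer_apply, cosetState_mul_star,
    cosetState_mul_star, mul_Xop_apply, proj_eq_diagonal (SDelta S Δ), Matrix.mul_diagonal, mul_Xop_apply,
    hadamard_check_apply]
  have hab : a + x + (b + x) = a + b := by
    rw [add_add_add_comm, vec_add_self, add_zero]
  have hbx : b + x + x = b := by
    rw [add_assoc, vec_add_self, add_zero]
  have hdisj : b + x ∈ S → b + x + Δ ∉ S := fun h => by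
    rwa [S.add_mem_iff_right h]
  simp only [hab, hbx, add_zero, SDelta, Set.mem_union, mem_image_add_right, SetLike.mem_coe]
  by_cases h₀ : a + b ∈ S <;> by_cases h₁ : b + x ∈ S <;> by_cases h₂ : b + x + Δ ∈ S <;>
    simp_all
end

section
/- Let $\lambda \ge 1$ be a natural number and let $\mathcal{G} \subseteq \{1,\dots,\lambda\}$. Let $\mathsf{chal}$ be uniformly distributed in $\{0,1\}^{\lambda}$ and set $\mathrm{Open}(\mathsf{chal}) := \{t : \mathsf{chal}_t = 1\}$. Then $\Pr\big[\, \mathrm{Open}(\mathsf{chal}) \subseteq \mathcal{G} \;\text{and}\; |\mathrm{Open}(\mathsf{chal})| \ge 2|\mathcal{G}| - \lambda \,\big] \;\le\; 2^{-\lambda/8} + e^{-\lambda/8}.$ -/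
open scoped Classical

/-- At most `2 ^ |G|` bit strings have their support inside `G`. -/
theorem card_support_subset_le {ι : Type*} [Fintype ι] [DecidableEq ι] (G : Finset ι) :
    (Finset.univ.filter fun c : ι → Bool =>
      (Finset.univ.filter fun t => c t) ⊆ G).card ≤ 2 ^ G.card := by
  rw [← Finset.card_powerset]
  refine Finset.card_le_card_of_injOn (fun c => Finset.univ.filter fun t => c t) ?_ ?_
  · intro c hc
    exact Finset.mem_coe.mpr (Finset.mem_powerset.mpr (Finset.mem_filter.mp hc).2)
  · intro c _ d _ h
    funext t
    have ht := Finset.ext_iff.mp h t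
    simp only [Finset.mem_filter, Finset.mem_univ, true_and] at ht
    exact Bool.eq_iff_iff.mpr ht

/-- The moment generating function of the centred support size of a uniform bit string. -/
theorem sum_exp_card_support {ι : Type*} [Fintype ι] [DecidableEq ι] (s : ℝ) :
    ∑ c : ι → Bool,
        Real.exp (s * (2 * ((Finset.univ.filter fun t => c t).card : ℝ) - Fintype.card ι))
      = (2 * Real.cosh s) ^ Fintype.card ι := by
  have hprod (c : ι → Bool) :
      Real.exp (s * (2 * ((Finset.univ.filter fun t => c t).card : ℝ) - Fintype.card ι))
        = ∏ t, Real.exp (if c t then s else -s) := by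
    rw [← Real.exp_sum]
    congr 1
    have hterm (t : ι) : (if c t then s else -s) = s * (2 * (if c t then 1 else 0) - 1) := by
      split_ifs <;> ring
    simp only [hterm, ← Finset.mul_sum, Finset.sum_sub_distrib, Finset.sum_boole]
    simp
  have hexpand := Finset.prod_univ_sum (fun _ : ι => (Finset.univ : Finset Bool))
    (fun _ b => Real.exp (if b then s else -s))
  rw [Fintype.piFinset_univ] at hexpand
  simp only [hprod, ← hexpand, Fintype.sum_bool, Finset.prod_const, Finset.card_univ]
  rw [Real.cosh_eq]
  simp only [if_true, Bool.false_eq_true, if_false]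
  congr 1
  ring

/-- Hoeffding's inequality for the support size of a uniform bit string, as a count. -/
theorem card_three_quarters_le_card_support {ι : Type*} [Fintype ι] [DecidableEq ι] :
    ((Finset.univ.filter fun c : ι → Bool =>
        3 * Fintype.card ι ≤ 4 * (Finset.univ.filter fun t => c t).card).card : ℝ)
      ≤ 2 ^ Fintype.card ι * Real.exp (-(Fintype.card ι : ℝ) / 8) := by
  set n := Fintype.card ι with hn
  set S := Finset.univ.filter fun c : ι → Bool =>
    3 * n ≤ 4 * (Finset.univ.filter fun t => c t).card with hS
  have hmarkov : (S.card : ℝ) * Real.exp ((n : ℝ) / 4) ≤ (2 * Real.cosh (1 / 2)) ^ n := by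
    rw [← sum_exp_card_support (ι := ι), ← nsmul_eq_mul]
    refine (Finset.card_nsmul_le_sum S _ _ fun c hc => ?_).trans
      (Finset.sum_le_sum_of_subset_of_nonneg (Finset.subset_univ S)
        fun _ _ _ => (Real.exp_pos _).le)
    have hc' : (3 * n : ℝ) ≤ 4 * ((Finset.univ.filter fun t => c t).card : ℝ) := by
      exact_mod_cast (Finset.mem_filter.mp hc).2
    apply Real.exp_le_exp.mpr
    rw [← hn]
    linarith
  have hcosh : Real.cosh (1 / 2) ^ n ≤ Real.exp ((n : ℝ) / 8) := by
    refine (pow_le_pow_left₀ (Real.cosh_pos _).le (Real.cosh_le_exp_half_sq _) n).trans_eq ?_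
    rw [← Real.exp_nat_mul]
    congr 1
    ring
  have hsplit : Real.exp (-(n : ℝ) / 8) * Real.exp ((n : ℝ) / 4) = Real.exp ((n : ℝ) / 8) := by
    rw [← Real.exp_add]
    congr 1
    ring
  refine le_of_mul_le_mul_right ?_ (Real.exp_pos ((n : ℝ) / 4))
  rw [mul_assoc, hsplit]
  rw [mul_pow] at hmarkov
  exact hmarkov.trans (by gcongr)

/-- **Cut-and-choose combinatorial core.** Let `chal` be uniform in `{0,1}^λ` and let
`Open(chal) = {t : chal t = 1}`. For any `G ⊆ {1,…,λ}`,
`Pr[Open(chal) ⊆ G ∧ |Open(chal)| ≥ 2|G| - λ] ≤ 2^{-λ/8} + e^{-λ/8}`,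
where the probability is the counting fraction over all `2^λ` challenges and the
inequality `|Open(chal)| ≥ 2|G| - λ` is over the integers. -/
theorem cut_and_choose_bound (lam : ℕ) (hlam : 1 ≤ lam) (G : Finset (Fin lam)) :
    ((Finset.univ.filter fun chal : Fin lam → Bool =>
        (Finset.univ.filter fun t => chal t) ⊆ G ∧
        2 * (G.card : ℤ) - (lam : ℤ)
          ≤ ((Finset.univ.filter fun t => chal t).card : ℤ)).card : ℝ)
      / 2 ^ lam
    ≤ (2 : ℝ) ^ (-(lam : ℝ) / 8) + Real.exp (-(lam : ℝ) / 8) := by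
  rcases le_total (8 * G.card) (7 * lam) with hG | hG
  · refine le_add_of_le_of_nonneg ?_ (Real.exp_pos _).le
    rw [div_le_iff₀ (by positivity), ← Real.rpow_natCast 2 lam, ← Real.rpow_add two_pos]
    have hG' : (8 * G.card : ℝ) ≤ 7 * lam := by exact_mod_cast hG
    calc _ ≤ ((2 ^ G.card : ℕ) : ℝ) :=
          Nat.cast_le.mpr ((Finset.card_le_card (Finset.monotone_filter_right Finset.univ
            fun _ _ hc => hc.1)).trans (card_support_subset_le G))
      _ = (2 : ℝ) ^ (G.card : ℝ) := by rw [Nat.cast_pow, Nat.cast_ofNat, Real.rpow_natCast]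
      _ ≤ _ := Real.rpow_le_rpow_of_exponent_le one_le_two (by linarith)
  · refine le_add_of_nonneg_of_le (by positivity) ?_
    rw [div_le_iff₀ (by positivity), mul_comm (Real.exp _)]
    have hoeffding := card_three_quarters_le_card_support (ι := Fin lam)
    rw [Fintype.card_fin] at hoeffding
    refine le_trans ?_ hoeffding
    exact Nat.cast_le.mpr (Finset.card_le_card (Finset.monotone_filter_right Finset.univ
      fun c _ hc => by have := hc.2; omega))
end

section
/- Let $\mathcal{H}$ be a finite-dimensional complex Hilbert space, $K$ a nonempty finite set, and $N \ge 1$ an integer. For each $k \in K$ let $\psi_k \in \mathcal{H}$ be a unit vector and let $\Pi_{k,1},\dots,\Pi_{k,N}$ be orthogonal projections on $\mathcal{H}$ with $\Pi_{k,i}\Pi_{k,j} = 0$ for all $i \ne j$ and $(\sum_{i=1}^N \Pi_{k,i})\psi_k = \psi_k$. Then for every orthogonal projection $D$ on $\mathcal{H}$, $\mathbb{E}_{k \leftarrow K}\big[\|D\psi_k\|^2\big] - \sum_{i=1}^{N} \mathbb{E}_{k \leftarrow K}\big[\|D\,\Pi_{k,i}\,\psi_k\|^2\big] \;\le\; N \cdot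 \sqrt{\textstyle\sum_{i \ne j} \mathbb{E}_{k \leftarrow K}\big[\|\Pi_{k,j}\, D\, \Pi_{k,i}\, \psi_k\|^2\big]}.$ -/
section Projection

variable {H : Type*} [NormedAddCommGroup H] [InnerProductSpace ℂ H] [CompleteSpace H]

theorem inner_projection_left_right {T : H →L[ℂ] H} (hsa : IsSelfAdjoint T)
    (hidem : T * T = T) (x y : H) : inner ℂ (T x) (T y) = inner ℂ x (T y) := by
  have h : T (T y) = T y := congrArg (fun S : H →L[ℂ] H => S y) hidem
  rw [← ContinuousLinearMap.adjoint_inner_right, hsa.adjoint_eq, h]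

theorem norm_projection_sq {T : H →L[ℂ] H} (hsa : IsSelfAdjoint T)
    (hidem : T * T = T) (x : H) : ‖T x‖ ^ 2 = (inner ℂ x (T x)).re := by
  rw [← inner_projection_left_right hsa hidem]
  exact (inner_self_eq_norm_sq (𝕜 := ℂ) (T x)).symm

theorem norm_projection_apply_le {T : H →L[ℂ] H} (hsa : IsSelfAdjoint T)
    (hidem : T * T = T) (x : H) : ‖T x‖ ≤ ‖x‖ := by
  have h : ‖T x‖ ^ 2 ≤ ‖x‖ * ‖T x‖ :=
    (norm_projection_sq hsa hidem x).trans_le (re_inner_le_norm (𝕜 := ℂ) x (T x))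
  nlinarith [norm_nonneg (T x), norm_nonneg x]

/-- The interference terms of a projective decomposition of a unit vector are bounded by the
norms of the components that `D` moves from one block to another. -/
theorem norm_sq_sub_sum_norm_sq_le {ι : Type*} [Fintype ι] [DecidableEq ι]
    {ψ : H} (hψ : ‖ψ‖ = 1) {P : ι → H →L[ℂ] H}
    (hsa : ∀ i, IsSelfAdjoint (P i)) (hidem : ∀ i, P i * P i = P i)
    (hsum : (∑ i, P i) ψ = ψ)
    {D : H →L[ℂ] H} (hDsa : IsSelfAdjoint D) (hDidem : D * D = D) :
    ‖D ψ‖ ^ 2 - ∑ i, ‖D (P i ψ)‖ ^ 2 ≤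
      ∑ p ∈ (Finset.univ : Finset (ι × ι)).filter (fun p => p.1 ≠ p.2),
        ‖P p.2 (D (P p.1 ψ))‖ := by
  have hexpand : ‖D ψ‖ ^ 2 =
      ∑ p : ι × ι, (inner ℂ (P p.2 ψ) (D (P p.1 ψ))).re := by
    rw [norm_projection_sq hDsa hDidem]
    conv_lhs => rw [← hsum]
    simp only [sum_apply, map_sum, sum_inner, inner_sum, Complex.re_sum]
    rw [Fintype.sum_prod_type]
  have hdiag : ∑ p ∈ (Finset.univ : Finset (ι × ι)).filter (fun p => ¬ p.1 ≠ p.2),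
      (inner ℂ (P p.2 ψ) (D (P p.1 ψ))).re = ∑ i, ‖D (P i ψ)‖ ^ 2 := by
    simp only [norm_projection_sq hDsa hDidem, not_not, Finset.sum_filter,
      Fintype.sum_prod_type, Finset.sum_ite_eq, Finset.mem_univ, if_true]
  rw [hexpand, ← hdiag, ← Finset.sum_filter_add_sum_filter_not _ (fun p : ι × ι => p.1 ≠ p.2),
    add_sub_cancel_right]
  refine Finset.sum_le_sum fun p _ => ?_
  have hle : ‖P p.2 ψ‖ ≤ 1 := hψ ▸ norm_projection_apply_le (hsa p.2) (hidem p.2) ψ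
  have hmove : inner ℂ (P p.2 ψ) (D (P p.1 ψ)) = inner ℂ (P p.2 ψ) (P p.2 (D (P p.1 ψ))) := by
    rw [inner_projection_left_right (hsa _) (hidem _), ← ContinuousLinearMap.adjoint_inner_right,
      (hsa p.2).adjoint_eq]
  rw [hmove]
  exact (re_inner_le_norm (𝕜 := ℂ) _ _).trans (mul_le_of_le_one_left (norm_nonneg _) hle)

end Projection

/-- Cauchy–Schwarz for the sum over a set of at most `N ^ 2` indices of uniform averages. -/
theorem average_sum_le_mul_sqrt {K α : Type*} [Fintype K] [Nonempty K] (s : Finset α) {N : ℕ}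
    (hs : s.card ≤ N ^ 2) (a : K → α → ℝ) :
    (∑ k, ∑ p ∈ s, a k p) / (Fintype.card K : ℝ) ≤
      (N : ℝ) * Real.sqrt (∑ p ∈ s, (∑ k, a k p ^ 2) / (Fintype.card K : ℝ)) := by
  have hK : (0 : ℝ) < Fintype.card K := by exact_mod_cast Fintype.card_pos
  have hs' : (s.card : ℝ) ≤ (N : ℝ) ^ 2 := by exact_mod_cast hs
  have hcs : (∑ k, ∑ p ∈ s, a k p) ^ 2 ≤
      (Fintype.card K * s.card : ℝ) * ∑ p ∈ s, ∑ k, a k p ^ 2 := by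
    have h := sq_sum_le_card_mul_sum_sq (s := (Finset.univ : Finset K) ×ˢ s)
      (f := fun q => a q.1 q.2)
    rw [Finset.sum_product, Finset.sum_product, Finset.card_product, Finset.card_univ,
      Finset.sum_comm (f := fun k p => a k p ^ 2)] at h
    exact_mod_cast h
  have hnonneg : 0 ≤ ∑ p ∈ s, ∑ k, a k p ^ 2 := by positivity
  rw [← Finset.sum_div]
  refine le_trans (Real.le_sqrt_of_sq_le (y := (N : ℝ) ^ 2 *
    ((∑ p ∈ s, ∑ k, a k p ^ 2) / (Fintype.card K : ℝ))) ?_) ?_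
  · rw [div_pow, div_le_iff₀ (by positivity)]
    refine hcs.trans ?_
    calc (Fintype.card K * s.card : ℝ) * ∑ p ∈ s, ∑ k, a k p ^ 2
        ≤ (Fintype.card K * (N : ℝ) ^ 2) * ∑ p ∈ s, ∑ k, a k p ^ 2 := by gcongr
      _ = _ := by field_simp
  · rw [Real.sqrt_mul (by positivity), Real.sqrt_sq (by positivity)]

/-- **State decomposition lemma.** Let `ψ k` be unit vectors in a finite-dimensional complex
Hilbert space, and for each `k` let `P k 1, …, P k N` be mutually orthogonal projections
whose sum fixes `ψ k`. Then for every orthogonal projection `D`,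
`𝔼_k ‖D ψ_k‖² - ∑ᵢ 𝔼_k ‖D Π_{k,i} ψ_k‖² ≤ N √(∑_{i≠j} 𝔼_k ‖Π_{k,j} D Π_{k,i} ψ_k‖²)`,
where `𝔼_k` averages over a uniformly random `k`. -/
theorem state_decomposition
    {H : Type*} [NormedAddCommGroup H] [InnerProductSpace ℂ H] [FiniteDimensional ℂ H]
    {K : Type*} [Fintype K] [Nonempty K]
    (N : ℕ) (hN : 1 ≤ N)
    (ψ : K → H) (hψ : ∀ k, ‖ψ k‖ = 1)
    (P : K → Fin N → H →L[ℂ] H)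
    (hsa : ∀ k i, IsSelfAdjoint (P k i))
    (hidem : ∀ k i, P k i * P k i = P k i)
    (horth : ∀ k i j, i ≠ j → P k i * P k j = 0)
    (hsum : ∀ k, (∑ i, P k i) (ψ k) = ψ k)
    (D : H →L[ℂ] H) (hDsa : IsSelfAdjoint D) (hDidem : D * D = D) :
    (∑ k, ‖D (ψ k)‖ ^ 2) / (Fintype.card K : ℝ)
      - ∑ i, (∑ k, ‖D (P k i (ψ k))‖ ^ 2) / (Fintype.card K : ℝ)
    ≤ (N : ℝ) * Real.sqrt
        (∑ p ∈ (Finset.univ : Finset (Fin N × Fin N)).filter (fun p => p.1 ≠ p.2),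
          (∑ k, ‖P k p.2 (D (P k p.1 (ψ k)))‖ ^ 2) / (Fintype.card K : ℝ)) := by
  have : CompleteSpace H := FiniteDimensional.complete ℂ H
  have hcard : ((Finset.univ : Finset (Fin N × Fin N)).filter (fun p => p.1 ≠ p.2)).card
      ≤ N ^ 2 :=
    (Finset.card_le_univ _).trans (by simp [sq])
  refine le_trans ?_ (average_sum_le_mul_sqrt _ hcard fun k p => ‖P k p.2 (D (P k p.1 (ψ k)))‖)
  rw [← Finset.sum_div, ← sub_div, Finset.sum_comm, ← Finset.sum_sub_distrib]
  gcongr with k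
  exact norm_sq_sub_sum_norm_sq_le (hψ k) (hsa k) (hidem k) (hsum k) hDsa hDidem
end

section
/- Fix finite sets $X$ (query domain) and a query-answer register $\mathbb{F}_2^{\ell}$, a finite-dimensional workspace $W$, and let $\mathcal{H} := \mathbb{C}^{X} \otimes \mathbb{C}^{\mathbb{F}_2^{\ell}} \otimes W$. For a function $O : X \to \mathbb{F}_2^{\ell}$ let $\bar{O}$ be the unitary on $\mathcal{H}$ with $\bar{O}\,|x, y, w\rangle = |x, y + O(x), w\rangle$, and for $S \subseteq X$ let $\Pi[S]$ be the orthogonal projection onto $\mathrm{span}\{|x,y,w\rangle : x \in S\}$. A $q$-query oracle algorithm is a tuple $(B_0,\dots,B_q)$ of unitaries on $\mathcal{H}$, and for a function $O$ and a unit vector $z \in \mathcal{H}$ its output state is $U^{O}(z) := B_q \bar{O} B_{q-1}\bar{O}\cdots \bar{O} B_0\, z$. Now let $K$ be a nonempty finite set and for each $k \in K$ let $z_k \in \mathcal{H}$ be a unit vector, $O_k^0, O_k^1 : X \to \mathbb{F}_2^{\ell}$ functions, and $S_k \subseteq X$ a set such that $O_k^0(x) = O_k^1(x)$ for all $x \notin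 S_k$. Suppose $\epsilon \ge 0$ is such that for every $q$-query oracle algorithm $(B_0,\dots,B_q)$, $\mathbb{E}_{k \leftarrow K}\big[\|\Pi[S_k]\, U^{O_k^0}(z_k)\|^2\big] \le \epsilon$. Then for every $q$-query oracle algorithm $(B_0,\dots,B_q)$ and every family $(D_k)_{k\in K}$ of self-adjoint operators on $\mathcal{H}$ with $0 \preceq D_k \preceq I$, $\Big| \mathbb{E}_{k \leftarrow K}\big[\langle U^{O_k^0}(z_k),\ D_k\, U^{O_k^0}(z_k)\rangle\big] - \mathbb{E}_{k \leftarrow K}\big[\langle U^{O_k^1}(z_k),\ D_k\, U^{O_k^1}(z_k)\rangle\big] \Big| \le 4 q \sqrt{\epsilon}.$ -/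
open scoped Classical ComplexOrder

noncomputable section

/-- The oracle unitary `Ō |x, y, w⟩ = |x, y + O(x), w⟩`, as a matrix on the Hilbert space
with basis `X × 𝔽₂^ℓ × W` (query register, answer register, workspace). -/
def oracleMat {X W : Type*} {ℓ : ℕ} [DecidableEq X] [DecidableEq W]
    (O : X → Fin ℓ → ZMod 2) :
    Matrix (X × (Fin ℓ → ZMod 2) × W) (X × (Fin ℓ → ZMod 2) × W) ℂ :=
  Matrix.of fun a b => if a = (b.1, b.2.1 + O b.1, b.2.2) then 1 else 0

/-- The projection `Π[S]` onto the span of basis states whose query register lies in `S`. -/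
def projMat {X W : Type*} (ℓ : ℕ) (S : Set X) :
    Matrix (X × (Fin ℓ → ZMod 2) × W) (X × (Fin ℓ → ZMod 2) × W) ℂ :=
  Matrix.of fun a b => if a = b ∧ a.1 ∈ S then 1 else 0

/-- The total unitary `B_q Ō B_{q-1} Ō ⋯ Ō B_0` of a `q`-query oracle algorithm
`(B_0, …, B_q)` run with the oracle `O`. -/
def algMat {X W : Type*} {ℓ : ℕ} [Fintype X] [Fintype W] [DecidableEq X] [DecidableEq W]
    (O : X → Fin ℓ → ZMod 2) :
    (q : ℕ) →
      (Fin (q + 1) → Matrix (X × (Fin ℓ → ZMod 2) × W) (X × (Fin ℓ → ZMod 2) × W) ℂ) →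
      Matrix (X × (Fin ℓ → ZMod 2) × W) (X × (Fin ℓ → ZMod 2) × W) ℂ
  | 0, B => B 0
  | q + 1, B => B (Fin.last (q + 1)) * oracleMat O * algMat O q (fun i => B i.castSucc)

section EuclideanNorm

variable {ι : Type*} [Fintype ι]

/-- The Euclidean norm of a finitely indexed complex vector. -/
def euclNorm (v : ι → ℂ) : ℝ := ‖(WithLp.toLp 2 v : EuclideanSpace ℂ ι)‖

theorem euclNorm_sq (v : ι → ℂ) : euclNorm v ^ 2 = ∑ a, ‖v a‖ ^ 2 := by
  simp [euclNorm, EuclideanSpace.norm_sq_eq]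

theorem euclNorm_nonneg (v : ι → ℂ) : 0 ≤ euclNorm v := norm_nonneg _

theorem euclNorm_add_le (v w : ι → ℂ) : euclNorm (v + w) ≤ euclNorm v + euclNorm w := by
  simpa [euclNorm] using norm_add_le (WithLp.toLp 2 v : EuclideanSpace ℂ ι) (WithLp.toLp 2 w)

theorem euclNorm_sub_le (v w : ι → ℂ) : euclNorm (v - w) ≤ euclNorm v + euclNorm w := by
  simpa [euclNorm] using norm_sub_le (WithLp.toLp 2 v : EuclideanSpace ℂ ι) (WithLp.toLp 2 w)

theorem norm_star_dotProduct_le (v w : ι → ℂ) : ‖star v ⬝ᵥ w‖ ≤ euclNorm v * euclNorm w := by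
  have h := norm_inner_le_norm (𝕜 := ℂ) (WithLp.toLp 2 v : EuclideanSpace ℂ ι) (WithLp.toLp 2 w)
  rwa [EuclideanSpace.inner_toLp_toLp, dotProduct_comm] at h

open scoped Matrix.Norms.L2Operator in
theorem euclNorm_mulVec_le_of_norm_le_one {A : Matrix ι ι ℂ} (hA : ‖A‖ ≤ 1) (v : ι → ℂ) :
    euclNorm (A.mulVec v) ≤ euclNorm v :=
  (Matrix.l2_opNorm_mulVec A (WithLp.toLp 2 v)).trans
    (mul_le_of_le_one_left (norm_nonneg _) hA)

open scoped Matrix.Norms.L2Operator in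
theorem euclNorm_mulVec_le_of_mem_unitaryGroup [DecidableEq ι] {U : Matrix ι ι ℂ}
    (hU : U ∈ Matrix.unitaryGroup ι ℂ) (v : ι → ℂ) : euclNorm (U.mulVec v) ≤ euclNorm v := by
  refine euclNorm_mulVec_le_of_norm_le_one ?_ v
  rcases subsingleton_or_nontrivial (Matrix ι ι ℂ) with h | h
  · exact (congrArg norm (Subsingleton.elim U 0)).trans_le (norm_zero.trans_le zero_le_one)
  · exact (CStarRing.norm_of_mem_unitary hU).le

open scoped Matrix.Norms.L2Operator MatrixOrder in
theorem euclNorm_mulVec_le_of_posSemidef [DecidableEq ι] {D : Matrix ι ι ℂ}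
    (hD0 : D.PosSemidef) (hD1 : (1 - D).PosSemidef) (v : ι → ℂ) :
    euclNorm (D.mulVec v) ≤ euclNorm v :=
  euclNorm_mulVec_le_of_norm_le_one
    ((CStarAlgebra.norm_le_one_iff_of_nonneg D hD0.nonneg).2 (Matrix.le_iff.2 hD1)) v

/-- Acceptance probabilities of a binary measurement are Lipschitz in the state. -/
theorem abs_re_quadForm_sub_le [DecidableEq ι] {D : Matrix ι ι ℂ}
    (hD0 : D.PosSemidef) (hD1 : (1 - D).PosSemidef) {u v : ι → ℂ}
    (hu : euclNorm u ≤ 1) (hv : euclNorm v ≤ 1) :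
    |(star u ⬝ᵥ D.mulVec u).re - (star v ⬝ᵥ D.mulVec v).re| ≤ 2 * euclNorm (u - v) := by
  have hsymm : (star u ⬝ᵥ D.mulVec v).re = (star v ⬝ᵥ D.mulVec u).re := by
    have h : star (star u ⬝ᵥ D.mulVec v) = star v ⬝ᵥ D.mulVec u := by
      rw [← Matrix.star_dotProduct_star, star_star, Matrix.star_mulVec, hD0.isHermitian.eq,
        Matrix.dotProduct_mulVec]
    rw [← h, Complex.star_def, Complex.conj_re]
  have hfactor : (star u ⬝ᵥ D.mulVec u).re - (star v ⬝ᵥ D.mulVec v).re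
      = (star (u - v) ⬝ᵥ D.mulVec (u + v)).re := by
    simp only [star_sub, Matrix.mulVec_add, sub_dotProduct, dotProduct_add, Complex.sub_re,
      Complex.add_re, hsymm]
    ring
  rw [hfactor]
  calc |(star (u - v) ⬝ᵥ D.mulVec (u + v)).re|
      ≤ ‖star (u - v) ⬝ᵥ D.mulVec (u + v)‖ := Complex.abs_re_le_norm _
    _ ≤ euclNorm (u - v) * euclNorm (D.mulVec (u + v)) := norm_star_dotProduct_le _ _
    _ ≤ euclNorm (u - v) * 2 := by
        gcongr
        · exact euclNorm_nonneg _
        · linarith [euclNorm_mulVec_le_of_posSemidef hD0 hD1 (u + v), euclNorm_add_le u v]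
    _ = 2 * euclNorm (u - v) := mul_comm _ _

end EuclideanNorm

section Oracle

variable {X W : Type*} {ℓ : ℕ} [Fintype X] [Fintype W] [DecidableEq X] [DecidableEq W]

theorem oracleMat_mulVec_apply (O : X → Fin ℓ → ZMod 2) (v : X × (Fin ℓ → ZMod 2) × W → ℂ)
    (a : X × (Fin ℓ → ZMod 2) × W) :
    (oracleMat O).mulVec v a = v (a.1, a.2.1 - O a.1, a.2.2) := by
  have h : ∀ b : X × (Fin ℓ → ZMod 2) × W,
      a = (b.1, b.2.1 + O b.1, b.2.2) ↔ b = (a.1, a.2.1 - O a.1, a.2.2) := by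
    rintro ⟨x, y, w⟩
    obtain ⟨x', y', w'⟩ := a
    constructor
    · intro h
      simp only [Prod.mk.injEq] at h
      obtain ⟨rfl, rfl, rfl⟩ := h
      simp
    · intro h
      simp only [Prod.mk.injEq] at h
      obtain ⟨rfl, rfl, rfl⟩ := h
      simp
  simp only [Matrix.mulVec, dotProduct, oracleMat, Matrix.of_apply, h, ite_mul, one_mul, zero_mul,
    Finset.sum_ite_eq', Finset.mem_univ, if_true]

theorem projMat_mulVec_apply (S : Set X) (v : X × (Fin ℓ → ZMod 2) × W → ℂ)
    (a : X × (Fin ℓ → ZMod 2) × W) :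
    (projMat ℓ S).mulVec v a = if a.1 ∈ S then v a else 0 := by
  simp only [Matrix.mulVec, dotProduct, projMat, Matrix.of_apply]
  split_ifs with h <;> simp [h]

theorem euclNorm_oracleMat_mulVec (O : X → Fin ℓ → ZMod 2)
    (v : X × (Fin ℓ → ZMod 2) × W → ℂ) :
    euclNorm ((oracleMat O).mulVec v) = euclNorm v := by
  rw [← sq_eq_sq₀ (euclNorm_nonneg _) (euclNorm_nonneg _), euclNorm_sq, euclNorm_sq]
  simp only [oracleMat_mulVec_apply]
  let e : (X × (Fin ℓ → ZMod 2) × W) ≃ (X × (Fin ℓ → ZMod 2) × W) :=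
    { toFun := fun a => (a.1, a.2.1 - O a.1, a.2.2)
      invFun := fun a => (a.1, a.2.1 + O a.1, a.2.2)
      left_inv := fun a => by simp
      right_inv := fun a => by simp }
  exact Equiv.sum_comp e fun a => ‖v a‖ ^ 2

theorem projMat_mulVec_oracleMat_mulVec (S : Set X) (O : X → Fin ℓ → ZMod 2)
    (v : X × (Fin ℓ → ZMod 2) × W → ℂ) :
    (projMat ℓ S).mulVec ((oracleMat O).mulVec v)
      = (oracleMat O).mulVec ((projMat ℓ S).mulVec v) := by
  ext a
  simp only [projMat_mulVec_apply, oracleMat_mulVec_apply]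

theorem oracleMat_mulVec_sub_eq_of_agree {S : Set X} {O₀ O₁ : X → Fin ℓ → ZMod 2}
    (h : ∀ x, x ∉ S → O₀ x = O₁ x) (v : X × (Fin ℓ → ZMod 2) × W → ℂ) :
    (oracleMat O₀).mulVec v - (oracleMat O₁).mulVec v
      = (oracleMat O₀).mulVec ((projMat ℓ S).mulVec v)
        - (oracleMat O₁).mulVec ((projMat ℓ S).mulVec v) := by
  ext a
  simp only [Pi.sub_apply, oracleMat_mulVec_apply, projMat_mulVec_apply]
  by_cases ha : a.1 ∈ S
  · simp [ha]
  · simp [ha, h a.1 ha]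

/-- The state `B_q Ō ⋯ Ō B_0 z` produced by the first `q` queries of an algorithm given by an
infinite sequence of operators. -/
def runState (O : X → Fin ℓ → ZMod 2)
    (B : ℕ → Matrix (X × (Fin ℓ → ZMod 2) × W) (X × (Fin ℓ → ZMod 2) × W) ℂ)
    (z : X × (Fin ℓ → ZMod 2) × W → ℂ) (q : ℕ) : X × (Fin ℓ → ZMod 2) × W → ℂ :=
  (algMat O q fun i => B i).mulVec z

theorem runState_zero (O : X → Fin ℓ → ZMod 2)
    (B : ℕ → Matrix (X × (Fin ℓ → ZMod 2) × W) (X × (Fin ℓ → ZMod 2) × W) ℂ)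
    (z : X × (Fin ℓ → ZMod 2) × W → ℂ) : runState O B z 0 = (B 0).mulVec z := rfl

theorem runState_succ (O : X → Fin ℓ → ZMod 2)
    (B : ℕ → Matrix (X × (Fin ℓ → ZMod 2) × W) (X × (Fin ℓ → ZMod 2) × W) ℂ)
    (z : X × (Fin ℓ → ZMod 2) × W → ℂ) (q : ℕ) :
    runState O B z (q + 1) = (B (q + 1)).mulVec ((oracleMat O).mulVec (runState O B z q)) := by
  simp [runState, algMat, Matrix.mulVec_mulVec, Matrix.mul_assoc]

variable {B : ℕ → Matrix (X × (Fin ℓ → ZMod 2) × W) (X × (Fin ℓ → ZMod 2) × W) ℂ}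

theorem euclNorm_runState_le (hB : ∀ i, B i ∈ Matrix.unitaryGroup (X × (Fin ℓ → ZMod 2) × W) ℂ)
    (O : X → Fin ℓ → ZMod 2) (z : X × (Fin ℓ → ZMod 2) × W → ℂ) (q : ℕ) :
    euclNorm (runState O B z q) ≤ euclNorm z := by
  induction q with
  | zero => exact euclNorm_mulVec_le_of_mem_unitaryGroup (hB 0) z
  | succ q ih =>
    rw [runState_succ]
    refine (euclNorm_mulVec_le_of_mem_unitaryGroup (hB _) _).trans ?_
    rwa [euclNorm_oracleMat_mulVec]

/-- The hybrid argument: output states under two oracles agreeing off `S` differ by at most twice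
the total amplitude that the queries place on `S`. -/
theorem euclNorm_runState_sub_le
    (hB : ∀ i, B i ∈ Matrix.unitaryGroup (X × (Fin ℓ → ZMod 2) × W) ℂ)
    {S : Set X} {O₀ O₁ : X → Fin ℓ → ZMod 2} (h : ∀ x, x ∉ S → O₀ x = O₁ x)
    (z : X × (Fin ℓ → ZMod 2) × W → ℂ) (q : ℕ) :
    euclNorm (runState O₀ B z q - runState O₁ B z q)
      ≤ ∑ i ∈ Finset.range q, 2 * euclNorm ((projMat ℓ S).mulVec (runState O₀ B z i)) := by
  induction q with
  | zero => simp [runState_zero, euclNorm]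
  | succ q ih =>
    rw [Finset.sum_range_succ, runState_succ, runState_succ, ← Matrix.mulVec_sub]
    refine (euclNorm_mulVec_le_of_mem_unitaryGroup (hB _) _).trans ?_
    set u := runState O₀ B z q
    set v := runState O₁ B z q
    have hsplit : (oracleMat O₀).mulVec u - (oracleMat O₁).mulVec v
        = (oracleMat O₁).mulVec (u - v)
          + ((oracleMat O₀).mulVec u - (oracleMat O₁).mulVec u) := by
      rw [Matrix.mulVec_sub]; abel
    rw [hsplit, oracleMat_mulVec_sub_eq_of_agree h]
    refine (euclNorm_add_le _ _).trans (add_le_add ?_ ?_)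
    · rwa [euclNorm_oracleMat_mulVec]
    · refine (euclNorm_sub_le _ _).trans ?_
      rw [euclNorm_oracleMat_mulVec, euclNorm_oracleMat_mulVec, two_mul]

theorem runState_congr (O : X → Fin ℓ → ZMod 2)
    {B' : ℕ → Matrix (X × (Fin ℓ → ZMod 2) × W) (X × (Fin ℓ → ZMod 2) × W) ℂ}
    (z : X × (Fin ℓ → ZMod 2) × W → ℂ) {q : ℕ} (h : ∀ i ≤ q, B i = B' i) :
    runState O B z q = runState O B' z q := by
  have hfun : (fun i : Fin (q + 1) => B i) = fun i : Fin (q + 1) => B' i :=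
    funext fun i => h i (Nat.le_of_lt_succ i.2)
  simp only [runState, hfun]

/-- Padding an algorithm with idle queries does not change the weight of its state on `S`. -/
theorem euclNorm_projMat_runState_add (S : Set X) (O : X → Fin ℓ → ZMod 2)
    (z : X × (Fin ℓ → ZMod 2) × W → ℂ) {q : ℕ} (h : ∀ i, q < i → B i = 1) (m : ℕ) :
    euclNorm ((projMat ℓ S).mulVec (runState O B z (q + m)))
      = euclNorm ((projMat ℓ S).mulVec (runState O B z q)) := by
  induction m with
  | zero => rfl
  | succ m ih =>
    rw [← add_assoc, runState_succ, h _ (by omega), Matrix.one_mulVec,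
      projMat_mulVec_oracleMat_mulVec, euclNorm_oracleMat_mulVec, ih]

end Oracle

/-- The average of a real function is at most the root of the average of its square. -/
theorem sum_div_card_le_sqrt {K : Type*} [Fintype K] {f : K → ℝ} {ε : ℝ}
    (h : (∑ k, f k ^ 2) / (Fintype.card K : ℝ) ≤ ε) :
    (∑ k, f k) / (Fintype.card K : ℝ) ≤ Real.sqrt ε := by
  refine Real.le_sqrt_of_sq_le (le_trans ?_ h)
  exact sum_div_card_sq_le_sum_sq_div_card

/-- **Oracle indistinguishability.** If no `q`-query oracle algorithm can place more than
`ε` (squared) amplitude on the set `S k` where the oracles `O 0 k` and `O 1 k` differ, then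
for every `q`-query algorithm `B` and every family `D k` of operators with `0 ⪯ D k ⪯ I`,
the acceptance probabilities of the measurements `(D k, I - D k)` on the output states
under the two oracles differ on average by at most `4 q √ε`. -/
theorem oracle_indistinguishability
    {X W : Type*} [Fintype X] [DecidableEq X] [Nonempty X]
    [Fintype W] [DecidableEq W] [Nonempty W] (ℓ : ℕ)
    {K : Type*} [Fintype K] [Nonempty K]
    (z : K → (X × (Fin ℓ → ZMod 2) × W) → ℂ)
    (hz : ∀ k, ∑ a, ‖z k a‖ ^ 2 = 1)
    (O : Fin 2 → K → X → Fin ℓ → ZMod 2)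
    (S : K → Set X)
    (hagree : ∀ k x, x ∉ S k → O 0 k x = O 1 k x)
    (q : ℕ) (ε : ℝ) (hε : 0 ≤ ε)
    (hyp : ∀ B : Fin (q + 1) →
        Matrix (X × (Fin ℓ → ZMod 2) × W) (X × (Fin ℓ → ZMod 2) × W) ℂ,
      (∀ i, B i ∈ Matrix.unitaryGroup (X × (Fin ℓ → ZMod 2) × W) ℂ) →
      (∑ k, ∑ a,
          ‖((projMat ℓ (S k)).mulVec ((algMat (O 0 k) q B).mulVec (z k))) a‖ ^ 2)
        / (Fintype.card K : ℝ) ≤ ε)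
    (B : Fin (q + 1) →
      Matrix (X × (Fin ℓ → ZMod 2) × W) (X × (Fin ℓ → ZMod 2) × W) ℂ)
    (hB : ∀ i, B i ∈ Matrix.unitaryGroup (X × (Fin ℓ → ZMod 2) × W) ℂ)
    (D : K → Matrix (X × (Fin ℓ → ZMod 2) × W) (X × (Fin ℓ → ZMod 2) × W) ℂ)
    (hD0 : ∀ k, (D k).PosSemidef)
    (hD1 : ∀ k, (1 - D k).PosSemidef) :
    |(∑ k, (∑ a, (starRingEnd ℂ) (((algMat (O 0 k) q B).mulVec (z k)) a) *
            (((D k).mulVec ((algMat (O 0 k) q B).mulVec (z k))) a)).re)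
          / (Fintype.card K : ℝ)
      - (∑ k, (∑ a, (starRingEnd ℂ) (((algMat (O 1 k) q B).mulVec (z k)) a) *
            (((D k).mulVec ((algMat (O 1 k) q B).mulVec (z k))) a)).re)
          / (Fintype.card K : ℝ)|
    ≤ 4 * q * Real.sqrt ε := by
  have hsum (u v : X × (Fin ℓ → ZMod 2) × W → ℂ) :
      ∑ a, (starRingEnd ℂ) (u a) * v a = star u ⬝ᵥ v := rfl
  simp only [hsum]
  simp only [← euclNorm_sq] at hz hyp
  let C : ℕ → Matrix (X × (Fin ℓ → ZMod 2) × W) (X × (Fin ℓ → ZMod 2) × W) ℂ :=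
    fun n => if h : n < q + 1 then B ⟨n, h⟩ else 1
  have hC (i : ℕ) : C i ∈ Matrix.unitaryGroup (X × (Fin ℓ → ZMod 2) × W) ℂ := by
    by_cases h : i < q + 1
    · simpa only [C, dif_pos h] using hB ⟨i, h⟩
    · simpa only [C, dif_neg h] using one_mem _
  have hBC : B = fun i : Fin (q + 1) => C i := by
    ext i : 1
    simp only [C, dif_pos i.isLt]
  have hrun (j : Fin 2) (k : K) :
      (algMat (O j k) q B).mulVec (z k) = runState (O j k) C (z k) q := by
    rw [hBC, runState]
  simp only [hrun]
  have hz1 (k : K) : euclNorm (z k) = 1 :=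
    (sq_eq_sq₀ (euclNorm_nonneg _) zero_le_one).1 (by rw [hz k, one_pow])
  have hweight (i : ℕ) (hi : i < q) :
      (∑ k, euclNorm ((projMat ℓ (S k)).mulVec (runState (O 0 k) C (z k) i)))
        / (Fintype.card K : ℝ) ≤ Real.sqrt ε := by
    let P : ℕ → Matrix (X × (Fin ℓ → ZMod 2) × W) (X × (Fin ℓ → ZMod 2) × W) ℂ :=
      fun n => if n ≤ i then C n else 1
    have hP (n : ℕ) : P n ∈ Matrix.unitaryGroup (X × (Fin ℓ → ZMod 2) × W) ℂ := by
      by_cases h : n ≤ i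
      · simpa only [P, if_pos h] using hC n
      · simpa only [P, if_neg h] using one_mem _
    refine sum_div_card_le_sqrt (le_of_eq_of_le ?_ (hyp (fun n => P n) fun n => hP n))
    congr 1
    refine Finset.sum_congr rfl fun k _ => ?_
    have hpad := euclNorm_projMat_runState_add (B := P) (S k) (O 0 k) (z k) (q := i)
      (fun n hn => if_neg (by omega)) (q - i)
    rw [Nat.add_sub_cancel' hi.le] at hpad
    rw [runState_congr (B := C) (B' := P) (O 0 k) (z k) fun n hn => (if_pos hn).symm, ← hpad,
      runState]
  rw [← sub_div, ← Finset.sum_sub_distrib, abs_div, Nat.abs_cast]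
  calc |∑ k, ((star (runState (O 0 k) C (z k) q) ⬝ᵥ
            (D k).mulVec (runState (O 0 k) C (z k) q)).re
          - (star (runState (O 1 k) C (z k) q) ⬝ᵥ
            (D k).mulVec (runState (O 1 k) C (z k) q)).re)| / (Fintype.card K : ℝ)
      ≤ (∑ k, ∑ i ∈ Finset.range q,
          4 * euclNorm ((projMat ℓ (S k)).mulVec (runState (O 0 k) C (z k) i)))
          / (Fintype.card K : ℝ) := by
        gcongr
        refine (Finset.abs_sum_le_sum_abs _ _).trans (Finset.sum_le_sum fun k _ => ?_)
        have hstate (j : Fin 2) : euclNorm (runState (O j k) C (z k) q) ≤ 1 :=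
          (euclNorm_runState_le hC _ _ _).trans_eq (hz1 k)
        have hmeas := abs_re_quadForm_sub_le (hD0 k) (hD1 k) (hstate 0) (hstate 1)
        have hhybrid := euclNorm_runState_sub_le hC (hagree k) (z k) q
        rw [← Finset.mul_sum] at hhybrid ⊢
        linarith
    _ = 4 * ∑ i ∈ Finset.range q,
          (∑ k, euclNorm ((projMat ℓ (S k)).mulVec (runState (O 0 k) C (z k) i)))
          / (Fintype.card K : ℝ) := by
        rw [Finset.sum_comm, ← Finset.sum_div, ← mul_div_assoc]
        simp only [Finset.mul_sum]
    _ ≤ 4 * ∑ _i ∈ Finset.range q, Real.sqrt ε := by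
        gcongr with i hi
        exact hweight i (Finset.mem_range.1 hi)
    _ = 4 * q * Real.sqrt ε := by
        rw [Finset.sum_const, Finset.card_range, nsmul_eq_mul, mul_assoc]

end
end
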